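/- Let φ : D → D be an irrational pseudo-rotation, and let T := Dφ(0) be its linearization at the origin (an invertible orientation-preserving linear map of ℝ²). Let f_T : S¹ → S¹ be the induced circle homeomorphism f_T(v) := Tv/|Tv|. Then the rotation number of f_T, as an element of ℝ/ℤ, equals the rotation number of the boundary restriction φ|_{∂D}. -/

import Mathlib

open Complex Metric Set Filter

/-- The closed unit disk in `ℂ ≅ ℝ²`. -/
def Disk : Set ℂ := Metric.closedBall 0 1

/-- A `C^∞`-smooth diffeomorphism of the closed unit disk: a bijection of `Disk`
which is `C^∞` up to the boundary together with its inverse. -/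
structure SmoothDiskDiffeo where
  toFun : ℂ → ℂ
  invFun : ℂ → ℂ
  mapsTo : Set.MapsTo toFun Disk Disk
  mapsTo_inv : Set.MapsTo invFun Disk Disk
  left_inv : ∀ z ∈ Disk, invFun (toFun z) = z
  right_inv : ∀ z ∈ Disk, toFun (invFun z) = z
  smooth : ContDiffOn ℝ (⊤ : ℕ∞) toFun Disk
  smooth_inv : ContDiffOn ℝ (⊤ : ℕ∞) invFun Disk

/-- The point `e^{2πix}` on the unit circle. -/
noncomputable def eCirc (x : ℝ) : ℂ := Complex.exp ((2 * Real.pi * x) * Complex.I)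

/-!
In area-preserving polar coordinates around the fixed point, `φ` lifts to a homeomorphism of the
strip `0 ≤ im z ≤ 1` that acts on the bottom line as a lift of `f_T` and on the top line as a lift
of the boundary map. If the translation numbers `τ₀` and `τ₁` of these two differ, choose a rational
`p / q` strictly between them: the `q`-th iterate followed by the translation by `-p` moves the two
boundary lines in opposite directions, so by the Poincaré–Birkhoff theorem it fixes a point of the
open strip, which is a periodic point of `φ` other than the origin. Hence `τ₀ = τ₁`.

A fixed point is found as in Kerékjártó's argument. If there were none, composing with a small
vertical push would keep the displacement nonzero, and by area preservation some orbit of the pushed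
map would climb from the bottom of the strip past its top. It is threaded by an invariant simple
curve, along which the displacement turns by exactly `π`, in a sense determined by the twist.
Reflecting the strip in its centre gives the opposite sense.
-/

section Logarithms

theorem exists_continuous_exp_eq {X : Type*} [TopologicalSpace X] [SimplyConnectedSpace X]
    [LocallyPathConnectedSpace X] {f : X → ℂ} (hf : Continuous f) (h0 : ∀ x, f x ≠ 0) :
    ∃ L : X → ℂ, Continuous L ∧ ∀ x, exp (L x) = f x := by
  obtain ⟨x₀⟩ : Nonempty X := inferInstance
  obtain ⟨L, ⟨-, hL⟩, -⟩ := Complex.isCoveringMap_exp.existsUnique_continuousMap_lifts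
    (⟨fun x => ⟨f x, h0 x⟩, by fun_prop⟩ : C(X, {z : ℂ // z ≠ 0})) x₀ (log (f x₀))
    (by ext; simp [exp_log (h0 x₀)])
  exact ⟨L, L.continuous, fun x => by simpa using congrArg Subtype.val (congrFun hL x)⟩

variable {X : Type*} [TopologicalSpace X] {s : Set X} {x y : X}

theorem eq_of_forall_exists_int (hs : IsPreconnected s) {g : X → ℝ}
    (hg : ContinuousOn g s) (hint : ∀ x ∈ s, ∃ n : ℤ, g x = n) (hx : x ∈ s) (hy : y ∈ s) :
    g x = g y := by
  have hrange : IsDiscrete (range ((↑) : ℤ → ℝ)) :=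
    Int.isClosedEmbedding_coe_real.isEmbedding.isInducing.isDiscrete_range
  exact hs.constant_of_mapsTo hrange hg
    (fun x hx => (hint x hx).imp fun _ h => h.symm) hx hy

theorem sub_eq_sub_of_exp_eq (hs : IsPreconnected s) {L M : X → ℂ} (hL : ContinuousOn L s)
    (hM : ContinuousOn M s) (h : ∀ x ∈ s, exp (L x) = exp (M x)) (hx : x ∈ s) (hy : y ∈ s) :
    L x - M x = L y - M y := by
  choose! n hn using fun x hx => exp_eq_exp_iff_exists_int.1 (h x hx)
  have hdiff (x) (hx : x ∈ s) : L x - M x = n x * (2 * Real.pi * I) := by rw [hn x hx]; ring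
  have hn_im (x) (hx : x ∈ s) : (L x - M x).im / (2 * Real.pi) = n x := by
    rw [hdiff x hx]
    simp
  have hconst := eq_of_forall_exists_int hs
    (g := fun x => (L x - M x).im / (2 * Real.pi)) (by fun_prop) (fun x hx => ⟨_, hn_im x hx⟩) hx hy
  rw [hn_im x hx, hn_im y hy, Int.cast_inj] at hconst
  rw [hdiff x hx, hdiff y hy, hconst]

theorem im_eq_of_im_exp_eq_zero (hs : IsPreconnected s) {L : X → ℂ} (hL : ContinuousOn L s)
    (h : ∀ x ∈ s, (exp (L x)).im = 0) (hx : x ∈ s) (hy : y ∈ s) : (L x).im = (L y).im := by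
  have hint (x) (hx : x ∈ s) : ∃ n : ℤ, (L x).im / Real.pi = n := by
    have hsin : Real.sin (L x).im = 0 := by
      simpa [exp_im, Real.exp_ne_zero] using h x hx
    obtain ⟨n, hn⟩ := Real.sin_eq_zero_iff.1 hsin
    exact ⟨n, by rw [← hn]; field_simp⟩
  have hconst := eq_of_forall_exists_int hs (g := fun x => (L x).im / Real.pi)
    (by fun_prop) hint hx hy
  simpa [div_left_inj' Real.pi_ne_zero] using hconst

theorem log_ofReal_add_mul_I {a ε : ℝ} (ha : a ≠ 0) (hε : 0 < ε) :
    log (a + ε * I) = log a + log (1 + ε * I / a) := by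
  have ha' : (a : ℂ) ≠ 0 := ofReal_ne_zero.2 ha
  have him : (1 + ε * I / a : ℂ).im = ε / a := by simp [div_ofReal_im]
  have hne : (1 + ε * I / a : ℂ) ≠ 0 := fun h => by
    rw [h, zero_im] at him
    exact (div_ne_zero hε.ne' ha) him.symm
  have harg : arg a + arg (1 + ε * I / a : ℂ) ∈ Ioc (-Real.pi) Real.pi := by
    obtain hneg | hpos := ha.lt_or_gt
    · have : arg (1 + ε * I / a : ℂ) < 0 := arg_neg_iff.2 (him ▸ div_neg_of_pos_of_neg hε hneg)
      have := neg_pi_lt_arg (1 + ε * I / a : ℂ)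
      rw [arg_ofReal_of_neg hneg]
      constructor <;> linarith [Real.pi_pos]
    · rw [arg_ofReal_of_nonneg hpos.le, zero_add]
      exact arg_mem_Ioc _
  rw [← log_mul ha' hne harg]
  congr 1
  field_simp

end Logarithms

section Circle

theorem norm_eCirc (x : ℝ) : ‖eCirc x‖ = 1 := by
  simpa [eCirc] using norm_exp_ofReal_mul_I (2 * Real.pi * x)

theorem eCirc_ne_zero (x : ℝ) : eCirc x ≠ 0 := exp_ne_zero _

theorem hasDerivAt_eCirc (x : ℝ) : HasDerivAt eCirc (2 * Real.pi * I * eCirc x) x := by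
  have h := ((((hasDerivAt_id (x : ℂ)).const_mul (2 * Real.pi : ℂ)).mul_const I).cexp).comp_ofReal
  refine h.congr_deriv ?_
  simp only [eCirc, id, mul_one]
  ring

@[fun_prop]
theorem continuous_eCirc : Continuous eCirc := by
  unfold eCirc
  fun_prop

theorem eCirc_eq_eCirc_iff {x y : ℝ} : eCirc x = eCirc y ↔ ∃ n : ℤ, x = y + n := by
  have h2 : (2 * Real.pi * I : ℂ) ≠ 0 := two_pi_I_ne_zero
  rw [eCirc, eCirc, exp_eq_exp_iff_exists_int]
  refine exists_congr fun n => ?_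
  rw [show (2 * Real.pi * y * I + n * (2 * Real.pi * I) : ℂ) = 2 * Real.pi * I * (y + n) by ring,
    show (2 * Real.pi * x * I : ℂ) = 2 * Real.pi * I * x by ring, mul_right_inj' h2]
  exact_mod_cast Iff.rfl

theorem eCirc_add_int (x : ℝ) (n : ℤ) : eCirc (x + n) = eCirc x :=
  eCirc_eq_eCirc_iff.2 ⟨n, rfl⟩

theorem exp_div_norm_eq_eCirc (w : ℂ) : exp w / ‖exp w‖ = eCirc (w.im / (2 * Real.pi)) := by
  have hπ : (Real.pi : ℂ) ≠ 0 := by exact_mod_cast Real.pi_ne_zero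
  rw [norm_exp, ofReal_exp, ← exp_sub, eCirc, ofReal_div, ofReal_mul, ofReal_ofNat]
  congr 1
  field_simp
  rw [sub_eq_iff_eq_add', re_add_im]

theorem exists_eCirc_eq {w : ℂ} (hw : ‖w‖ = 1) : ∃ x, eCirc x = w := by
  have hw0 : w ≠ 0 := norm_ne_zero_iff.1 (by simp [hw])
  exact ⟨_, by rw [← exp_div_norm_eq_eCirc (log w), exp_log hw0, hw]; simp⟩

variable {X : Type*} [TopologicalSpace X]

theorem exists_continuous_eCirc_eq_div_norm [SimplyConnectedSpace X]
    [LocallyPathConnectedSpace X] {f : X → ℂ} (hf : Continuous f) (h0 : ∀ x, f x ≠ 0) :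
    ∃ θ : X → ℝ, Continuous θ ∧ ∀ x, eCirc (θ x) = f x / ‖f x‖ := by
  obtain ⟨L, hL, hexp⟩ := exists_continuous_exp_eq hf h0
  exact ⟨fun x => (L x).im / (2 * Real.pi), by fun_prop,
    fun x => by rw [← exp_div_norm_eq_eCirc, hexp]⟩

theorem exists_int_eqOn_add_of_eCirc_eq {s : Set X} (hs : IsPreconnected s) {θ₁ θ₂ : X → ℝ}
    (h₁ : ContinuousOn θ₁ s) (h₂ : ContinuousOn θ₂ s)
    (h : ∀ x ∈ s, eCirc (θ₁ x) = eCirc (θ₂ x)) : ∃ n : ℤ, ∀ x ∈ s, θ₁ x = θ₂ x + n := by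
  obtain rfl | ⟨x₀, hx₀⟩ := s.eq_empty_or_nonempty
  · simp
  choose! n hn using fun x hx => eCirc_eq_eCirc_iff.1 (h x hx)
  refine ⟨n x₀, fun x hx => ?_⟩
  have := eq_of_forall_exists_int hs (g := fun x => θ₁ x - θ₂ x) (by fun_prop)
    (fun x hx => ⟨n x, by rw [hn x hx]; ring⟩) hx hx₀
  linarith [hn x₀ hx₀]

end Circle

section Chords

theorem exists_continuousOn_exp_eq_chord {γ : ℝ → ℂ} {τ : ℝ}
    (hγ : ContinuousOn γ (Icc 0 (τ + 1))) (hinj : InjOn γ (Icc 0 (τ + 1))) (hτ : 0 ≤ τ) :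
    ∃ L : ℝ × ℝ → ℂ, Continuous L ∧
      ∀ s t, 0 ≤ s → s + 1 ≤ t → t ≤ τ + 1 → exp (L (s, t)) = γ t - γ s := by
  -- `(u p, v p)` retracts the plane onto the triangle `0 ≤ s`, `s + 1 ≤ t`, `t ≤ τ + 1`.
  let u (p : ℝ × ℝ) : ℝ := max 0 (min p.1 τ)
  let v (p : ℝ × ℝ) : ℝ := max (u p + 1) (min p.2 (τ + 1))
  have hu0 (p) : 0 ≤ u p := le_max_left _ _
  have huτ (p) : u p ≤ τ := max_le hτ (min_le_right _ _)
  have huv (p) : u p + 1 ≤ v p := le_max_left _ _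
  have hvτ (p) : v p ≤ τ + 1 := max_le (by linarith [huτ p]) (min_le_right _ _)
  have hu (p) : u p ∈ Icc 0 (τ + 1) := ⟨hu0 p, by linarith [huτ p]⟩
  have hv (p) : v p ∈ Icc 0 (τ + 1) := ⟨by linarith [hu0 p, huv p], hvτ p⟩
  have hcont : Continuous fun p => γ (v p) - γ (u p) :=
    (hγ.comp_continuous (by fun_prop) hv).sub (hγ.comp_continuous (by fun_prop) hu)
  obtain ⟨L, hL, hexp⟩ := exists_continuous_exp_eq hcont fun p =>
    sub_ne_zero.2 (hinj.ne (hv p) (hu p) (by linarith [huv p]))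
  refine ⟨L, hL, fun s t hs hst ht => ?_⟩
  have hus : u (s, t) = s := by simp [u, hs, show s ≤ τ by linarith]
  have hvt : v (s, t) = t := by simp [v, hus, ht, hst]
  rw [hexp, hus, hvt]

/-- The direction of the unit-time chord of a simple arc, followed continuously from its initial to
its final position, differs from the principal argument by the same amount at both ends: deform
through the chords issuing from the initial point, then through those ending at the final point. -/
theorem sub_log_eq_sub_log_of_exp_eq_chord {γ : ℝ → ℂ} {τ : ℝ}
    (hγ : ContinuousOn γ (Icc 0 (τ + 1))) (hinj : InjOn γ (Icc 0 (τ + 1))) (hτ : 0 ≤ τ)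
    (hlow : ∀ t ∈ Icc 1 (τ + 1), (γ 0).im < (γ t).im)
    (hhigh : ∀ s ∈ Icc 0 τ, (γ s).im < (γ (τ + 1)).im)
    {M : ℝ → ℂ} (hM : ContinuousOn M (Icc 0 τ))
    (hexp : ∀ t ∈ Icc 0 τ, exp (M t) = γ (t + 1) - γ t) :
    M τ - log (γ (τ + 1) - γ τ) = M 0 - log (γ 1 - γ 0) := by
  obtain ⟨L, hL, hLexp⟩ := exists_continuousOn_exp_eq_chord hγ hinj hτ
  have hslit {s t} (h : (γ s).im < (γ t).im) : γ t - γ s ∈ slitPlane :=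
    Or.inr (sub_pos.2 h).ne'
  have hdiag := sub_eq_sub_of_exp_eq (L := fun t => L (t, t + 1)) isPreconnected_Icc
    (by fun_prop) hM (fun t ht => by rw [hLexp _ _ ht.1 le_rfl (by linarith [ht.2]), hexp t ht])
    (left_mem_Icc.2 hτ) (right_mem_Icc.2 hτ)
  have hinitial := sub_eq_sub_of_exp_eq (s := Icc 1 (τ + 1)) (L := fun t => L (0, t))
    (M := fun t => log (γ t - γ 0)) isPreconnected_Icc (by fun_prop)
    (((hγ.mono (Icc_subset_Icc_left zero_le_one)).sub continuousOn_const).clog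
      fun t ht => hslit (hlow t ht))
    (fun t ht => by
      rw [hLexp _ _ le_rfl (by linarith [ht.1]) ht.2,
        exp_log (slitPlane_ne_zero (hslit (hlow t ht)))])
    (left_mem_Icc.2 (by linarith)) (right_mem_Icc.2 (by linarith))
  have hfinal := sub_eq_sub_of_exp_eq (s := Icc 0 τ) (L := fun s => L (s, τ + 1))
    (M := fun s => log (γ (τ + 1) - γ s)) isPreconnected_Icc (by fun_prop)
    ((continuousOn_const.sub (hγ.mono (Icc_subset_Icc_right (by linarith)))).clog
      fun s hs => hslit (hhigh s hs))
    (fun s hs => by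
      rw [hLexp _ _ hs.1 (by linarith [hs.2]) le_rfl,
        exp_log (slitPlane_ne_zero (hslit (hhigh s hs)))])
    (left_mem_Icc.2 hτ) (right_mem_Icc.2 hτ)
  simp only [zero_add] at hdiag
  linear_combination hdiag - hinitial - hfinal

theorem sub_log_eq_sub_log_of_exp_add_mul_I_eq_chord {γ : ℝ → ℂ} {τ : ℝ}
    (hγ : ContinuousOn γ (Icc 0 (τ + 1))) (hinj : InjOn γ (Icc 0 (τ + 1))) (hτ : 0 ≤ τ)
    (hlow : ∀ t ∈ Icc 1 (τ + 1), (γ 0).im < (γ t).im)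
    (hhigh : ∀ s ∈ Icc 0 τ, (γ s).im < (γ (τ + 1)).im)
    {B : ℝ → ℂ} (hB : ContinuousOn B (Icc 0 τ)) {ε : ℝ} (hε : 0 < ε)
    (hlt : ∀ t ∈ Icc 0 τ, ε < ‖exp (B t)‖)
    (hexp : ∀ t ∈ Icc 0 τ, exp (B t) + ε * I = γ (t + 1) - γ t)
    {a b : ℝ} (ha : exp (B 0) = a) (hb : exp (B τ) = b) :
    B τ - log b = B 0 - log a := by
  have hslit (t) (ht : t ∈ Icc 0 τ) : 1 + ε * I / exp (B t) ∈ slitPlane := by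
    refine mem_slitPlane_of_norm_lt_one ?_
    rw [norm_div, norm_mul, norm_I, mul_one, norm_real, Real.norm_of_nonneg hε.le,
      div_lt_one (hε.trans (hlt t ht))]
    exact hlt t ht
  have hcont : ContinuousOn (fun t => 1 + ε * I / exp (B t)) (Icc 0 τ) :=
    continuousOn_const.add (continuousOn_const.div hB.cexp fun t _ => exp_ne_zero _)
  have hends := sub_log_eq_sub_log_of_exp_eq_chord hγ hinj hτ hlow hhigh
    (M := fun t => B t + log (1 + ε * I / exp (B t))) (hB.add (hcont.clog hslit)) fun t ht => by
      have := exp_ne_zero (B t)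
      rw [exp_add, exp_log (slitPlane_ne_zero (hslit t ht)), ← hexp t ht]
      field_simp
  have hlog {t c : ℝ} (ht : t ∈ Icc 0 τ) (hc : exp (B t) = c) :
      log (γ (t + 1) - γ t) = log c + log (1 + ε * I / exp (B t)) := by
    have hc0 : c ≠ 0 := fun h => exp_ne_zero (B t) (by rw [hc, h, ofReal_zero])
    rw [← hexp t ht, hc, log_ofReal_add_mul_I hc0 hε]
  have hlog0 := hlog (left_mem_Icc.2 hτ) ha
  rw [zero_add] at hlog0
  linear_combination hends + hlog (right_mem_Icc.2 hτ) hb - hlog0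

theorem exists_first_hit {f : ℝ → ℝ} {a b c : ℝ} (hab : a ≤ b) (hf : ContinuousOn f (Icc a b))
    (ha : f a ≤ c) (hb : c ≤ f b) : ∃ τ ∈ Icc a b, f τ = c ∧ ∀ s ∈ Icc a τ, f s ≤ c := by
  have hclosed : IsClosed (Icc a b ∩ f ⁻¹' {c}) := hf.preimage_isClosed_of_isClosed isClosed_Icc
    isClosed_singleton
  obtain ⟨σ, hσ, hσc⟩ := intermediate_value_Icc hab hf ⟨ha, hb⟩
  obtain ⟨⟨hτ, hτc⟩, hleast⟩ := hclosed.isLeast_csInf ⟨σ, hσ, hσc⟩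
    (bddBelow_Icc.mono inter_subset_left)
  set τ := sInf (Icc a b ∩ f ⁻¹' {c})
  refine ⟨τ, hτ, hτc, fun s hs => le_of_not_gt fun hcs => ?_⟩
  have has : Icc a s ⊆ Icc a b := Icc_subset_Icc_right (hs.2.trans hτ.2)
  obtain ⟨r, hr, hrc⟩ := intermediate_value_Icc hs.1 (hf.mono has) ⟨ha, hcs.le⟩
  have hrs : r = s := le_antisymm hr.2 (hs.2.trans (hleast ⟨has hr, hrc⟩))
  exact hcs.ne' (hrs ▸ hrc)

end Chords

section Annulus

/-- The open strip `0 < Im z < 1`, the universal cover of an open annulus. -/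
def openStrip : Set ℂ := {z | z.im ∈ Ioo 0 1}

/-- `K` is a lift, to the closed strip `0 ≤ Im z ≤ 1`, of an area-preserving homeomorphism of the
annulus whose boundary maps lift to `F` (at height `0`) and `G` (at height `1`). So that `K` is
defined on all of `ℂ`, it is extended beyond the strip by keeping the height and moving the real
part as on the nearest boundary line. -/
structure IsAnnulusLift (K : ℂ → ℂ) (F G : ℝ → ℝ) : Prop where
  continuous : Continuous K
  injective : Function.Injective K
  map_add_one : ∀ z, K (z + 1) = K z + 1
  apply_of_im_nonpos : ∀ z : ℂ, z.im ≤ 0 → K z = F z.re + z.im * I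
  apply_of_one_le_im : ∀ z : ℂ, 1 ≤ z.im → K z = G z.re + z.im * I
  mapsTo : MapsTo K openStrip openStrip
  volume_image : ∀ X, MeasurableSet X → X ⊆ openStrip →
    MeasureTheory.volume (K '' X) = MeasureTheory.volume X

theorem volume_Ioo_reProdIm_Ioo (a b c d : ℝ) : MeasureTheory.volume (Ioo a b ×ℂ Ioo c d) =
    ENNReal.ofReal (b - a) * ENNReal.ofReal (d - c) := by
  have h := Complex.volume_preserving_equiv_real_prod.measure_preimage
    (s := Ioo a b ×ˢ Ioo c d) (measurableSet_Ioo.prod measurableSet_Ioo).nullMeasurableSet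
  rwa [MeasureTheory.Measure.volume_eq_prod, MeasureTheory.Measure.prod_prod, Real.volume_Ioo,
    Real.volume_Ioo] at h

namespace IsAnnulusLift

variable {K : ℂ → ℂ} {F G : ℝ → ℝ}

theorem map_add_int (h : IsAnnulusLift K F G) (z : ℂ) (n : ℤ) : K (z + n) = K z + n := by
  have hper : Function.Periodic (fun z => K z - z) 1 := fun z => by
    simp only [h.map_add_one]
    ring
  have := hper.int_mul n z
  rw [mul_one] at this
  linear_combination this

theorem im_apply_of_im_nonpos (h : IsAnnulusLift K F G) {z : ℂ} (hz : z.im ≤ 0) :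
    (K z).im = z.im := by
  simp [h.apply_of_im_nonpos z hz]

theorem im_apply_of_one_le_im (h : IsAnnulusLift K F G) {z : ℂ} (hz : 1 ≤ z.im) :
    (K z).im = z.im := by
  simp [h.apply_of_one_le_im z hz]

theorem im_apply_nonneg (h : IsAnnulusLift K F G) {z : ℂ} (hz : 0 ≤ z.im) : 0 ≤ (K z).im := by
  obtain hz0 | hz0 := hz.eq_or_lt
  · rw [h.im_apply_of_im_nonpos hz0.ge, ← hz0]
  obtain hz1 | hz1 := lt_or_ge z.im 1
  · exact (h.mapsTo ⟨hz0, hz1⟩).1.le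
  · rwa [h.im_apply_of_one_le_im hz1]

theorem isCompact_image_displacement (h : IsAnnulusLift K F G) :
    IsCompact ((fun z => K z - z) '' {z | z.im ∈ Icc 0 1}) := by
  have hcompact : IsCompact ((fun z => K z - z) '' (Icc (0 : ℝ) 1 ×ℂ Icc (0 : ℝ) 1)) :=
    (isCompact_Icc.reProdIm isCompact_Icc).image (h.continuous.sub continuous_id)
  convert hcompact using 1
  refine Subset.antisymm ?_ (image_mono fun z hz => hz.2)
  rintro _ ⟨z, hz, rfl⟩
  refine ⟨z + ((-⌊z.re⌋ : ℤ) : ℂ), ⟨?_, by simpa using hz⟩, ?_⟩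
  · have := Int.floor_le z.re
    have := Int.lt_floor_add_one z.re
    constructor <;> simp only [add_re, intCast_re, neg_re, Int.cast_neg] <;> linarith
  · simp only [h.map_add_int]
    ring

theorem exists_norm_sub_le (h : IsAnnulusLift K F G) :
    ∃ C, 0 ≤ C ∧ ∀ z : ℂ, z.im ∈ Icc 0 1 → ‖K z - z‖ ≤ C := by
  obtain ⟨C, hC, hle⟩ := h.isCompact_image_displacement.isBounded.exists_pos_norm_le
  exact ⟨C, hC.le, fun z hz => hle _ ⟨z, hz, rfl⟩⟩

theorem exists_forall_le_norm_sub (h : IsAnnulusLift K F G) (hfix : ∀ z, K z ≠ z) :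
    ∃ δ > 0, ∀ z : ℂ, z.im ∈ Icc 0 1 → δ ≤ ‖K z - z‖ := by
  have h0 : (0 : ℂ) ∉ (fun z => K z - z) '' {z | z.im ∈ Icc 0 1} := by
    rintro ⟨z, -, hz⟩
    exact hfix z (sub_eq_zero.1 hz)
  obtain ⟨δ, hδ, hball⟩ :=
    Metric.isOpen_iff.1 h.isCompact_image_displacement.isClosed.isOpen_compl 0 h0
  refine ⟨δ, hδ, fun z hz => le_of_not_gt fun hlt => ?_⟩
  exact hball (mem_ball_zero_iff.2 hlt) ⟨z, hz, rfl⟩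

end IsAnnulusLift

/-- The map `K` followed by a vertical push of height `ε`. -/
noncomputable def push (K : ℂ → ℂ) (ε : ℝ) (z : ℂ) : ℂ := K z + ε * I

@[simp]
theorem push_re (K : ℂ → ℂ) (ε : ℝ) (z : ℂ) : (push K ε z).re = (K z).re := by simp [push]

@[simp]
theorem push_im (K : ℂ → ℂ) (ε : ℝ) (z : ℂ) : (push K ε z).im = (K z).im + ε := by simp [push]

theorem abs_re_iterate_push_sub_le {K : ℂ → ℂ} {ε C : ℝ}
    (hC : ∀ z : ℂ, z.im ∈ Icc 0 1 → ‖K z - z‖ ≤ C) {z : ℂ}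
    (hstrip : ∀ n, (push K ε)^[n] z ∈ openStrip) (n : ℕ) :
    |((push K ε)^[n] z).re - z.re| ≤ n * C := by
  have hstep (i : ℕ) :
      dist ((push K ε)^[i] z).re ((push K ε)^[i + 1] z).re ≤ C := by
    rw [Function.iterate_succ_apply', push_re, dist_comm, Real.dist_eq, ← sub_re]
    exact (abs_re_le_norm _).trans (hC _ (Ioo_subset_Icc_self (hstrip i)))
  have := dist_le_range_sum_of_dist_le (f := fun i => ((push K ε)^[i] z).re) (d := fun _ => C) n
    fun {i} _ => hstep i
  rw [dist_comm, Real.dist_eq] at this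
  simpa using this

namespace IsAnnulusLift

variable {K : ℂ → ℂ} {F G : ℝ → ℝ} {ε : ℝ}

theorem continuous_push (h : IsAnnulusLift K F G) : Continuous (push K ε) :=
  h.continuous.add continuous_const

theorem injective_push (h : IsAnnulusLift K F G) : Function.Injective (push K ε) :=
  (add_left_injective _).comp h.injective

theorem volume_image_push (h : IsAnnulusLift K F G) {X : Set ℂ} (hX : MeasurableSet X)
    (hXs : X ⊆ openStrip) :
    MeasureTheory.volume (push K ε '' X) = MeasureTheory.volume X := by
  have himage : push K ε '' X = (· + (ε * I : ℂ)) '' (K '' X) := by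
    simp only [image_image]
    rfl
  rw [himage, image_add_right, MeasureTheory.measure_preimage_add_right, h.volume_image X hX hXs]

theorem im_iterate_push_nonneg (h : IsAnnulusLift K F G) (hε : 0 ≤ ε) {z : ℂ} (hz : 0 ≤ z.im)
    (n : ℕ) : 0 ≤ ((push K ε)^[n] z).im := by
  induction n with
  | zero => exact hz
  | succ n ih =>
    rw [Function.iterate_succ_apply', push_im]
    exact add_nonneg (h.im_apply_nonneg ih) hε

theorem le_im_iterate_push (h : IsAnnulusLift K F G) (hε : 0 ≤ ε) {z : ℂ} (hz : 0 ≤ z.im)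
    {n : ℕ} (hn : 1 ≤ n) : ε ≤ ((push K ε)^[n] z).im := by
  obtain ⟨n, rfl⟩ := Nat.exists_eq_add_of_le' hn
  rw [Function.iterate_succ_apply', push_im]
  linarith [h.im_apply_nonneg (h.im_iterate_push_nonneg hε hz n)]

theorem iterate_push_eq_iterate_push (h : IsAnnulusLift K F G) (hε : 0 ≤ ε) {m n : ℕ} {z w : ℂ}
    (hz : z.im ∈ Ico 0 ε) (hw : w.im ∈ Ico 0 ε) (e : (push K ε)^[m] z = (push K ε)^[n] w) :
    m = n ∧ z = w := by
  wlog hmn : m ≤ n generalizing m n z w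
  · exact (this hw hz e.symm (by omega)).imp Eq.symm Eq.symm
  obtain ⟨j, rfl⟩ := Nat.exists_eq_add_of_le hmn
  rw [Function.iterate_add_apply] at e
  have hzw := h.injective_push.iterate m e
  obtain rfl | hj := Nat.eq_zero_or_pos j
  · exact ⟨rfl, hzw⟩
  · have := h.le_im_iterate_push hε hw.1 hj
    rw [← hzw] at this
    exact absurd hz.2 this.not_gt

theorem im_iterate_push_lt_one (h : IsAnnulusLift K F G) (hε : 0 < ε) {z : ℂ}
    (hz : ∀ n, ((push K ε)^[n] z).im ≤ 1) (n : ℕ) : ((push K ε)^[n] z).im < 1 := by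
  by_contra! hge
  have := hz (n + 1)
  rw [Function.iterate_succ_apply', push_im, h.im_apply_of_one_le_im hge] at this
  linarith

theorem volume_image_iterate_push (h : IsAnnulusLift K F G) {R : Set ℂ} (hR : MeasurableSet R)
    (hstrip : ∀ n, MapsTo (push K ε)^[n] R openStrip) (n : ℕ) :
    MeasureTheory.volume ((push K ε)^[n] '' R) = MeasureTheory.volume R := by
  induction n with
  | zero => simp
  | succ n ih =>
    have hmeas : MeasurableSet ((push K ε)^[n] '' R) :=
      hR.image_of_continuousOn_injOn (h.continuous_push.iterate n).continuousOn
        (h.injective_push.iterate n).injOn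
    rw [Function.iterate_succ', image_comp, h.volume_image_push hmeas (hstrip n).image_subset, ih]

theorem natCast_mul_volume_le (h : IsAnnulusLift K F G) (hε : 0 ≤ ε) {R S : Set ℂ}
    (hR : MeasurableSet R) (hRε : ∀ z ∈ R, z.im ∈ Ico 0 ε)
    (hstrip : ∀ n, MapsTo (push K ε)^[n] R openStrip) {N : ℕ}
    (hS : ∀ n < N, MapsTo (push K ε)^[n] R S) :
    N * MeasureTheory.volume R ≤ MeasureTheory.volume S := by
  have hdisj : (Finset.range N : Set ℕ).PairwiseDisjoint fun n => (push K ε)^[n] '' R := by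
    intro m _ n _ hmn
    rw [Function.onFun, Set.disjoint_left]
    rintro _ ⟨z, hz, rfl⟩ ⟨w, hw, e⟩
    exact hmn (h.iterate_push_eq_iterate_push hε (hRε z hz) (hRε w hw) e.symm).1
  have hmeas (n) (_ : n ∈ Finset.range N) : MeasurableSet ((push K ε)^[n] '' R) :=
    hR.image_of_continuousOn_injOn (h.continuous_push.iterate n).continuousOn
      (h.injective_push.iterate n).injOn
  calc N * MeasureTheory.volume R
      = MeasureTheory.volume (⋃ n ∈ Finset.range N, (push K ε)^[n] '' R) := by
        rw [MeasureTheory.measure_biUnion_finset hdisj hmeas]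
        simp [h.volume_image_iterate_push hR hstrip]
    _ ≤ MeasureTheory.volume S := MeasureTheory.measure_mono <| iUnion₂_subset fun n hn =>
        (hS n (Finset.mem_range.1 hn)).image_subset

/-- Otherwise the images of the bottom layer of height `ε`, which are pairwise disjoint because the
push lifts everything above that layer, would exceed the area available in the strip. -/
theorem exists_one_lt_im_iterate_push (h : IsAnnulusLift K F G) (hε : 0 < ε) :
    ∃ z : ℂ, z.im ∈ Ioo 0 ε ∧ ∃ n, 1 < ((push K ε)^[n] z).im := by
  by_contra! hstay
  obtain ⟨C, hC0, hC⟩ := h.exists_norm_sub_le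
  have hstrip {z : ℂ} (hz : z.im ∈ Ioo 0 ε) (n : ℕ) : (push K ε)^[n] z ∈ openStrip := by
    refine ⟨?_, h.im_iterate_push_lt_one hε (hstay z hz) n⟩
    obtain rfl | hn := Nat.eq_zero_or_pos n
    · exact hz.1
    · exact hε.trans_le (h.le_im_iterate_push hε.le hz.1.le hn)
  obtain ⟨N, hN⟩ := exists_nat_gt (2 / ε)
  have hN0 : (0 : ℝ) < N := lt_trans (by positivity) hN
  let M : ℝ := 2 * C * N + 1
  have hR_meas : MeasurableSet (Ioo 0 M ×ℂ Ioo 0 ε) :=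
    (isOpen_Ioo.reProdIm isOpen_Ioo).measurableSet
  have hM0 : 0 < M := by positivity
  have hspread (n) (hn : n < N) : MapsTo (push K ε)^[n] (Ioo 0 M ×ℂ Ioo 0 ε)
      (Ioo (-(C * N)) (M + C * N) ×ℂ Ioo 0 1) := by
    intro z hz
    have hre := abs_le.1 (abs_re_iterate_push_sub_le hC (hstrip hz.2) n)
    have hnN : n * C ≤ C * N := by rw [mul_comm]; gcongr
    have := hz.1.1
    have := hz.1.2
    exact ⟨⟨by linarith, by linarith⟩, hstrip hz.2 n⟩
  have harea := h.natCast_mul_volume_le hε.le hR_meas (fun z hz => Ioo_subset_Ico_self hz.2)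
    (fun n z hz => hstrip hz.2 n) hspread
  have hwidth : M + C * N - -(C * N) = 2 * M - 1 := by ring
  rw [volume_Ioo_reProdIm_Ioo, volume_Ioo_reProdIm_Ioo, hwidth, sub_zero, sub_zero, sub_zero,
    ENNReal.ofReal_one, mul_one, ← ENNReal.ofReal_natCast, ← ENNReal.ofReal_mul hM0.le,
    ← ENNReal.ofReal_mul hN0.le,
    ENNReal.ofReal_le_ofReal_iff (by linarith [mul_nonneg hC0 hN0.le])] at harea
  have hM : 2 * M < N * ε * M := by
    rw [div_lt_iff₀ hε] at hN
    gcongr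
  linarith [mul_assoc (N : ℝ) M ε, mul_right_comm (N : ℝ) M ε]

end IsAnnulusLift

end Annulus

section Orbit

variable {X : Type*}

/-- The curve which follows the `n`-th iterate under `f` of the arc `g : [0, 1] → X` at times
`t ∈ [n, n + 1)`. -/
noncomputable def orbitCurve (f : X → X) (g : ℝ → X) (t : ℝ) : X := f^[⌊t⌋₊] (g (t - ⌊t⌋₊))

variable {f : X → X} {g : ℝ → X}

theorem orbitCurve_zero : orbitCurve f g 0 = g 0 := by simp [orbitCurve]

theorem orbitCurve_add_one {t : ℝ} (ht : 0 ≤ t) :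
    orbitCurve f g (t + 1) = f (orbitCurve f g t) := by
  simp only [orbitCurve]
  rw [Nat.floor_add_one ht, Function.iterate_succ_apply', Nat.cast_add_one,
    add_sub_add_right_eq_sub]

theorem orbitCurve_eq_iterate (hg : g 1 = f (g 0)) {n : ℕ} {t : ℝ} (ht : t ∈ Icc (n : ℝ) (n + 1)) :
    orbitCurve f g t = f^[n] (g (t - n)) := by
  rw [orbitCurve]
  obtain rfl | hlt := ht.2.eq_or_lt
  · rw [← Nat.cast_add_one, Nat.floor_natCast, sub_self, Function.iterate_succ_apply,
      Nat.cast_add_one, add_sub_cancel_left, hg]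
  · rw [(Nat.floor_eq_iff (n.cast_nonneg.trans ht.1)).2 ⟨ht.1, hlt⟩]

theorem continuousOn_orbitCurve [TopologicalSpace X] (hf : Continuous f)
    (hg : ContinuousOn g (Icc 0 1)) (hg1 : g 1 = f (g 0)) (n : ℕ) :
    ContinuousOn (orbitCurve f g) (Icc 0 n) := by
  induction n with
  | zero => simp
  | succ n ih =>
    have hstep : ContinuousOn (orbitCurve f g) (Icc n (n + 1)) := by
      refine ContinuousOn.congr ?_ fun t ht => orbitCurve_eq_iterate hg1 ht
      refine (hf.iterate n).comp_continuousOn (hg.comp (by fun_prop) fun t ht => ?_)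
      exact ⟨sub_nonneg.2 ht.1, by linarith [ht.2]⟩
    rw [Nat.cast_add_one, ← Icc_union_Icc_eq_Icc n.cast_nonneg (lt_add_one (n : ℝ)).le]
    exact ih.union_of_isClosed hstep isClosed_Icc isClosed_Icc

end Orbit

section FixedPoint

theorem exists_arc_through {w : ℂ} {ε : ℝ} (hw : w.im ∈ Ioo 0 ε) (b : ℝ) :
    ∃ g : ℝ → ℂ, Continuous g ∧ (∀ t, (g t).im = ε * t) ∧ g 0 = w.re ∧ g 1 = b + ε * I ∧
      ∃ s ∈ Icc (0 : ℝ) 1, g s = w := by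
  have hε : 0 < ε := hw.1.trans hw.2
  let s : ℝ := w.im / ε
  have hs0 : 0 < s := div_pos hw.1 hε
  have hs1 : s < 1 := (div_lt_one hε).2 hw.2
  refine ⟨fun t => (w.re + (b - w.re) * (t * (t - s) / (1 - s)) : ℝ) + (ε * t : ℝ) * I,
    by fun_prop, fun t => ?_, by simp, ?_, s, ⟨hs0.le, hs1.le⟩, ?_⟩
  · rw [add_im, ofReal_im, im_ofReal_mul, I_im, mul_one, zero_add]
  · simp [div_self (sub_pos.2 hs1).ne']
  · simp [show ε * s = w.im from mul_div_cancel₀ _ hε.ne']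

namespace IsAnnulusLift

variable {K : ℂ → ℂ} {F G : ℝ → ℝ}

theorem exists_invariant_curve (h : IsAnnulusLift K F G) {ε : ℝ} (hε : 0 < ε) :
    ∃ γ : ℝ → ℂ, (∀ n : ℕ, ContinuousOn γ (Icc 0 n)) ∧ InjOn γ (Ici 0) ∧
      (∀ t, 0 ≤ t → γ (t + 1) = push K ε (γ t)) ∧ (γ 0).im = 0 ∧ (∀ t, 0 ≤ t → 0 ≤ (γ t).im) ∧
      (∀ t, 1 ≤ t → ε ≤ (γ t).im) ∧ ∃ t, 0 ≤ t ∧ 1 < (γ t).im := by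
  obtain ⟨w, hw, N, hN⟩ := h.exists_one_lt_im_iterate_push hε
  obtain ⟨g, hg, hg_im, hg0, hg1, s, hs, hgs⟩ := exists_arc_through hw (F w.re)
  have hstep : g 1 = push K ε (g 0) := by
    rw [hg1, hg0, push, h.apply_of_im_nonpos _ (by simp)]
    simp
  have hbottom {t : ℝ} (ht : 0 ≤ t) : (g (t - ⌊t⌋₊)).im ∈ Ico 0 ε := by
    have := Nat.floor_le ht
    have := Nat.lt_floor_add_one t
    rw [hg_im]
    exact ⟨mul_nonneg hε.le (by linarith), by nlinarith⟩
  refine ⟨orbitCurve (push K ε) g, continuousOn_orbitCurve h.continuous_push hg.continuousOn hstep,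
    ?injOn, fun t => orbitCurve_add_one, ?zero, fun t ht => ?nonneg, fun t ht => ?layer,
    N + s, by linarith [hs.1, N.cast_nonneg (α := ℝ)], ?top⟩
  case injOn =>
    intro t ht t' ht' e
    obtain ⟨hfloor, hgt⟩ := h.iterate_push_eq_iterate_push hε.le (hbottom ht) (hbottom ht') e
    have := congrArg im hgt
    rw [hg_im, hg_im, hfloor] at this
    linarith [mul_left_cancel₀ hε.ne' this]
  case zero => rw [orbitCurve_zero, hg_im, mul_zero]
  case nonneg => exact h.im_iterate_push_nonneg hε.le (hbottom ht).1 _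
  case layer =>
    exact h.le_im_iterate_push hε.le (hbottom (by linarith)).1 ((Nat.one_le_floor_iff _).2 ht)
  case top =>
    rw [orbitCurve_eq_iterate hstep ⟨by linarith [hs.1], by linarith [hs.2]⟩, add_sub_cancel_left,
      hgs]
    exact hN

theorem exists_invariant_curve_first_hit (h : IsAnnulusLift K F G) {ε : ℝ} (hε : 0 < ε) :
    ∃ (γ : ℝ → ℂ) (τ : ℝ), 0 ≤ τ ∧ ContinuousOn γ (Icc 0 (τ + 1)) ∧ InjOn γ (Icc 0 (τ + 1)) ∧
      (∀ t ∈ Icc 0 τ, γ (t + 1) = push K ε (γ t)) ∧ (∀ t ∈ Icc 0 τ, (γ t).im ∈ Icc 0 1) ∧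
      (∀ t, 1 ≤ t → ε ≤ (γ t).im) ∧ (γ 0).im = 0 ∧ (γ τ).im = 1 := by
  obtain ⟨γ, hγ, hinj, hstep, h0, hnonneg, hlayer, σ, hσ, hσ1⟩ := h.exists_invariant_curve hε
  have hcont (b : ℝ) : ContinuousOn γ (Icc 0 b) :=
    (hγ ⌈b⌉₊).mono (Icc_subset_Icc_right (Nat.le_ceil b))
  obtain ⟨τ, hτ, hτ1, hle⟩ := exists_first_hit hσ (continuous_im.comp_continuousOn (hcont σ))
    (h0.le.trans zero_le_one) hσ1.le
  exact ⟨γ, τ, hτ.1, hcont _, hinj.mono Icc_subset_Ici_self, fun t ht => hstep t ht.1,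
    fun t ht => ⟨hnonneg t ht.1, hle t ht⟩, hlayer, h0, hτ1⟩

theorem im_log_displacement_eq (h : IsAnnulusLift K F G) {A : ℂ → ℂ} (hA : Continuous A)
    (hexp : ∀ z, exp (A z) = K z - z) {z w : ℂ} (hzw : z.im = w.im)
    (hw : w.im ≤ 0 ∨ 1 ≤ w.im) : (A z).im = (A w).im := by
  have hline : IsPreconnected {v : ℂ | v.im = w.im} :=
    ((convex_singleton w.im).linear_preimage imLm).isPreconnected
  refine im_eq_of_im_exp_eq_zero hline hA.continuousOn (fun v (hv : v.im = w.im) => ?_) hzw rfl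
  rw [hexp, sub_im]
  obtain hw | hw := hw
  · rw [h.im_apply_of_im_nonpos (hv ▸ hw), sub_self]
  · rw [h.im_apply_of_one_le_im (hv ▸ hw), sub_self]

/-- Pushing `K` up by half the minimal displacement makes some simple curve invariant, and this
curve crosses the strip. Its unit-time chords are the displacements of `K`, up to the push. -/
theorem im_log_displacement_zero_sub_I (h : IsAnnulusLift K F G) (hF : ∀ x, F x < x)
    (hG : ∀ x, x < G x) {A : ℂ → ℂ} (hA : Continuous A) (hexp : ∀ z, exp (A z) = K z - z) :
    (A 0).im - (A I).im = Real.pi := by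
  obtain ⟨δ, hδ, hle⟩ := h.exists_forall_le_norm_sub fun z hz =>
    exp_ne_zero (A z) (by rw [hexp, hz, sub_self])
  obtain ⟨γ, τ, hτ, hγ, hinj, hstep, hstrip, hlayer, h0, h1⟩ :=
    h.exists_invariant_curve_first_hit (half_pos hδ)
  have hγτ : ContinuousOn γ (Icc 0 τ) := hγ.mono (Icc_subset_Icc_right (by linarith))
  have htop : (γ (τ + 1)).im = 1 + δ / 2 := by
    rw [hstep τ (right_mem_Icc.2 hτ), push_im, h.im_apply_of_one_le_im h1.ge, h1]
  have hinitial : K (γ 0) - γ 0 = (F (γ 0).re - (γ 0).re : ℝ) := by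
    rw [h.apply_of_im_nonpos _ h0.le]
    apply Complex.ext <;> simp
  have hfinal : K (γ τ) - γ τ = (G (γ τ).re - (γ τ).re : ℝ) := by
    rw [h.apply_of_one_le_im _ h1.ge]
    apply Complex.ext <;> simp
  have hindex := sub_log_eq_sub_log_of_exp_add_mul_I_eq_chord hγ hinj hτ
    (fun t ht => by linarith [hlayer t ht.1]) (fun s hs => by linarith [(hstrip s hs).2])
    (hA.comp_continuousOn hγτ) (half_pos hδ)
    (fun t ht => (half_lt_self hδ).trans_le (by
      rw [Function.comp_apply, hexp]
      exact hle _ (hstrip t ht)))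
    (fun t ht => by rw [Function.comp_apply, hexp, hstep t ht, push]; ring)
    ((hexp _).trans hinitial) ((hexp _).trans hfinal)
  have him := congrArg im hindex
  rw [Function.comp_apply, Function.comp_apply, sub_im, sub_im, log_im, log_im,
    arg_ofReal_of_nonneg (sub_pos.2 (hG _)).le, arg_ofReal_of_neg (sub_neg.2 (hF _)),
    h.im_log_displacement_eq hA hexp (z := γ τ) (w := I) (by simp [h1]) (by simp),
    h.im_log_displacement_eq hA hexp (z := γ 0) (w := 0) (by simp [h0]) (by simp)] at him
  linarith

theorem id : IsAnnulusLift id id id where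
  continuous := continuous_id
  injective := Function.injective_id
  map_add_one _ := rfl
  apply_of_im_nonpos z _ := (re_add_im z).symm
  apply_of_one_le_im z _ := (re_add_im z).symm
  mapsTo := mapsTo_id _
  volume_image X _ _ := by rw [image_id]

theorem add_ofReal (h : IsAnnulusLift K F G) (r : ℝ) :
    IsAnnulusLift (fun z => K z + r) (fun x => F x + r) (fun x => G x + r) where
  continuous := h.continuous.add continuous_const
  injective := (add_left_injective _).comp h.injective
  map_add_one z := by rw [h.map_add_one, add_right_comm]
  apply_of_im_nonpos z hz := by
    rw [h.apply_of_im_nonpos z hz, ofReal_add, add_right_comm]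
  apply_of_one_le_im z hz := by
    rw [h.apply_of_one_le_im z hz, ofReal_add, add_right_comm]
  mapsTo z hz := by simpa [openStrip] using h.mapsTo hz
  volume_image X hX hXs := by
    have himage : (fun z => K z + r) '' X = (· + (r : ℂ)) '' (K '' X) := by
      rw [image_image]
    rw [himage, image_add_right, MeasureTheory.measure_preimage_add_right,
      h.volume_image X hX hXs]

theorem comp {K' : ℂ → ℂ} {F' G' : ℝ → ℝ} (h : IsAnnulusLift K F G)
    (h' : IsAnnulusLift K' F' G') : IsAnnulusLift (K ∘ K') (F ∘ F') (G ∘ G') where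
  continuous := h.continuous.comp h'.continuous
  injective := h.injective.comp h'.injective
  map_add_one z := by
    rw [Function.comp_apply, h'.map_add_one, h.map_add_one, Function.comp_apply]
  apply_of_im_nonpos z hz := by
    rw [Function.comp_apply, h.apply_of_im_nonpos _ ((h'.im_apply_of_im_nonpos hz).trans_le hz),
      h'.apply_of_im_nonpos z hz]
    simp
  apply_of_one_le_im z hz := by
    rw [Function.comp_apply,
      h.apply_of_one_le_im _ (hz.trans_eq (h'.im_apply_of_one_le_im hz).symm),
      h'.apply_of_one_le_im z hz]
    simp
  mapsTo := h.mapsTo.comp h'.mapsTo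
  volume_image X hX hXs := by
    have hmeas : MeasurableSet (K' '' X) :=
      hX.image_of_continuousOn_injOn h'.continuous.continuousOn h'.injective.injOn
    rw [image_comp, h.volume_image _ hmeas (h'.mapsTo.mono_left hXs).image_subset,
      h'.volume_image X hX hXs]

theorem iterate (h : IsAnnulusLift K F G) (n : ℕ) : IsAnnulusLift K^[n] F^[n] G^[n] := by
  induction n with
  | zero => exact id
  | succ n ih =>
    rw [Function.iterate_succ, Function.iterate_succ, Function.iterate_succ]
    exact ih.comp h

theorem volume_image_conj (h : IsAnnulusLift K F G) {e : ℂ ≃ᵐ ℂ}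
    (he : MeasureTheory.MeasurePreserving e) {X : Set ℂ} (hX : MeasurableSet X)
    (hXs : MapsTo e.symm X openStrip) :
    MeasureTheory.volume ((fun z => e (K (e.symm z))) '' X) = MeasureTheory.volume X := by
  have himage : (fun z => e (K (e.symm z))) '' X = e '' (K '' (e.symm '' X)) := by
    simp only [image_image]
  rw [himage, e.image_eq_preimage_symm, he.symm.measure_preimage_equiv,
    h.volume_image _ (e.symm.measurableSet_image.2 hX) hXs.image_subset,
    e.symm.image_eq_preimage_symm, MeasurableEquiv.symm_symm, he.measure_preimage_equiv]

theorem pointReflect (h : IsAnnulusLift K F G) :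
    IsAnnulusLift (fun z => I - K (I - z)) (fun x => -G (-x)) (fun x => -F (-x)) where
  continuous := continuous_const.sub (h.continuous.comp (continuous_const.sub continuous_id))
  injective := sub_right_injective.comp (h.injective.comp sub_right_injective)
  map_add_one z := by
    have := h.map_add_one (I - (z + 1))
    rw [show I - (z + 1) + 1 = I - z by ring] at this
    rw [this]
    ring
  apply_of_im_nonpos z hz := by
    rw [h.apply_of_one_le_im _ (by simpa using hz)]
    apply Complex.ext <;> simp
  apply_of_one_le_im z hz := by
    rw [h.apply_of_im_nonpos _ (by simpa using hz)]
    apply Complex.ext <;> simp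
  mapsTo z hz := by
    have hmem {v : ℂ} (hv : v ∈ openStrip) : I - v ∈ openStrip := by
      simpa [openStrip, and_comm] using hv
    exact hmem (h.mapsTo (hmem hz))
  volume_image X hX hXs := by
    have hsymm (z : ℂ) : (MeasurableEquiv.subLeft I).symm z = I - z :=
      (MeasurableEquiv.subLeft I).symm_apply_eq.2 (sub_sub_cancel I z).symm
    have := h.volume_image_conj (e := MeasurableEquiv.subLeft I)
      (MeasureTheory.Measure.measurePreserving_sub_left _ I) hX fun z hz => by
        simpa [hsymm, openStrip, and_comm] using hXs hz
    simp only [hsymm] at this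
    exact this

theorem reflect (h : IsAnnulusLift K F G) :
    IsAnnulusLift (fun z => -conjLIE (K (-conjLIE z))) (fun x => -F (-x)) (fun x => -G (-x)) where
  continuous := by
    have := h.continuous
    fun_prop
  injective := neg_injective.comp <| conjLIE.injective.comp <| h.injective.comp <|
    neg_injective.comp conjLIE.injective
  map_add_one z := by
    have := h.map_add_one (-conjLIE (z + 1))
    rw [show -conjLIE (z + 1) + 1 = -conjLIE z by simp] at this
    rw [this]
    simp
  apply_of_im_nonpos z hz := by
    rw [h.apply_of_im_nonpos _ (by simpa using hz)]
    apply Complex.ext <;> simp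
  apply_of_one_le_im z hz := by
    rw [h.apply_of_one_le_im _ (by simpa using hz)]
    apply Complex.ext <;> simp
  mapsTo z hz := by
    have hmem {v : ℂ} (hv : v ∈ openStrip) : -conjLIE v ∈ openStrip := by
      simpa [openStrip] using hv
    exact hmem (h.mapsTo (hmem hz))
  volume_image X hX hXs := h.volume_image_conj
    (e := (conjLIE.trans (LinearIsometryEquiv.neg ℝ)).toMeasurableEquiv)
    (LinearIsometryEquiv.measurePreserving _) hX fun z hz => by
      have := hXs hz
      simpa [openStrip] using this

/-- If there were no fixed point, the index computation would apply both to `K` and to its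
reflection in the centre `I / 2` of the strip, and would contradict itself. -/
theorem exists_apply_eq_self (h : IsAnnulusLift K F G) (hF : ∀ x, F x < x)
    (hG : ∀ x, x < G x) : ∃ z, K z = z := by
  by_contra! hfix
  obtain ⟨A, hA, hexp⟩ := exists_continuous_exp_eq (f := fun z => K z - z)
    (h.continuous.sub continuous_id') fun z => sub_ne_zero.2 (hfix z)
  have hindex := h.im_log_displacement_zero_sub_I hF hG hA hexp
  have hreflected := h.pointReflect.im_log_displacement_zero_sub_I
    (A := fun z => A (I - z) + Real.pi * I) (fun x => neg_lt.1 (hG _)) (fun x => lt_neg.1 (hF _))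
    (by fun_prop) fun z => by
      rw [exp_add, exp_pi_mul_I, hexp]
      ring
  simp only [sub_zero, add_im, mul_im, ofReal_re, I_im, mul_one, ofReal_im, I_re, mul_zero,
    add_zero, sub_self, add_sub_add_right_eq_sub] at hreflected
  linarith [Real.pi_pos]

theorem exists_mem_openStrip_apply_eq_self (h : IsAnnulusLift K F G)
    (htwist : (∀ x, F x < x) ∧ (∀ x, x < G x) ∨ (∀ x, x < F x) ∧ ∀ x, G x < x) :
    ∃ z ∈ openStrip, K z = z := by
  obtain ⟨z, hz⟩ : ∃ z, K z = z := by
    obtain ⟨hF, hG⟩ | ⟨hF, hG⟩ := htwist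
    · exact h.exists_apply_eq_self hF hG
    · obtain ⟨z, hz⟩ := h.reflect.exists_apply_eq_self (fun x => neg_lt.1 (hF _))
        (fun x => lt_neg.1 (hG _))
      exact ⟨-conjLIE z, by simpa using congrArg (fun w => -conjLIE w) hz⟩
  have hF : ∀ x, F x ≠ x := fun x => by
    obtain ⟨hF, -⟩ | ⟨hF, -⟩ := htwist
    exacts [(hF x).ne, (hF x).ne']
  have hG : ∀ x, G x ≠ x := fun x => by
    obtain ⟨-, hG⟩ | ⟨-, hG⟩ := htwist
    exacts [(hG x).ne', (hG x).ne]
  refine ⟨z, ⟨lt_of_not_ge fun hz0 => hF z.re ?_, lt_of_not_ge fun hz1 => hG z.re ?_⟩, hz⟩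
  · simpa [h.apply_of_im_nonpos z hz0] using congrArg re hz
  · simpa [h.apply_of_one_le_im z hz1] using congrArg re hz

theorem exists_iterate_eq_add_intCast {F G : CircleDeg1Lift} (h : IsAnnulusLift K F G)
    (hne : F.translationNumber ≠ G.translationNumber) :
    ∃ z ∈ openStrip, ∃ n : ℕ, 1 ≤ n ∧ ∃ p : ℤ, K^[n] z = z + p := by
  have hcast (r : ℚ) : (r.den * r : ℝ) = r.num := by exact_mod_cast r.den_mul_eq_num
  have hlt {H : CircleDeg1Lift} {r : ℚ} (hr : H.translationNumber < r) (x : ℝ) :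
      H^[r.den] x + (-r.num : ℝ) < x := by
    have := (H ^ r.den).map_lt_of_translationNumber_lt_int (n := r.num)
      (by rw [H.translationNumber_pow, ← hcast r]; gcongr) x
    rw [H.coe_pow] at this
    linarith
  have hgt {H : CircleDeg1Lift} {r : ℚ} (hr : r < H.translationNumber) (x : ℝ) :
      x < H^[r.den] x + (-r.num : ℝ) := by
    have := (H ^ r.den).lt_map_of_int_lt_translationNumber (n := r.num)
      (by rw [H.translationNumber_pow, ← hcast r]; gcongr) x
    rw [H.coe_pow] at this
    linarith
  obtain ⟨r, hr⟩ : ∃ r : ℚ, F.translationNumber < r ∧ r < G.translationNumber ∨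
      r < F.translationNumber ∧ G.translationNumber < r := by
    obtain hFG | hGF := hne.lt_or_gt
    · exact (exists_rat_btwn hFG).imp fun r hr => .inl hr
    · exact (exists_rat_btwn hGF).imp fun r hr => .inr hr.symm
  obtain ⟨z, hz, hfix⟩ := ((h.iterate r.den).add_ofReal (-r.num)).exists_mem_openStrip_apply_eq_self
    (hr.imp (fun hr => ⟨hlt hr.1, hgt hr.2⟩) fun hr => ⟨hgt hr.1, hlt hr.2⟩)
  refine ⟨z, hz, r.den, r.pos, r.num, ?_⟩
  rw [← eq_sub_iff_add_eq] at hfix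
  simpa using hfix

end IsAnnulusLift

end FixedPoint

section Derivatives

variable {E : Type*} [NormedAddCommGroup E] [NormedSpace ℝ E] {z : E}

theorem differentiableAt_of_exp {L : E → ℂ} (hL : ContinuousAt L z)
    (h : DifferentiableAt ℝ (fun w => exp (L w)) z) : DifferentiableAt ℝ L z := by
  have hone : exp (L z) * exp (-L z) = 1 := by rw [← exp_add, add_neg_cancel, exp_zero]
  have hlog : DifferentiableAt ℝ (fun w => log (exp (L w) * exp (-L z)) + L z) z :=
    (((differentiableAt_log (hone ▸ one_mem_slitPlane)).restrictScalars ℝ).comp z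
      (h.mul_const _)).add_const _
  refine hlog.congr_of_eventuallyEq ?_
  have him : Tendsto (fun w => (L w - L z).im) (nhds z) (nhds 0) := by
    have : ContinuousAt (fun w => (L w - L z).im) z := by fun_prop
    simpa using this.tendsto
  filter_upwards [him.eventually (Ioo_mem_nhds (neg_lt_zero.2 Real.pi_pos) Real.pi_pos)] with w hw
  rw [← exp_add, ← sub_eq_add_neg, log_exp hw.1 hw.2.le, sub_add_cancel]

theorem differentiableAt_of_eCirc {θ : E → ℝ} (hθ : ContinuousAt θ z)
    (h : DifferentiableAt ℝ (fun w => eCirc (θ w)) z) : DifferentiableAt ℝ θ z := by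
  have hL := imCLM.differentiableAt.comp z
    (differentiableAt_of_exp (L := fun w => 2 * Real.pi * θ w * I) (by fun_prop) h)
  refine (hL.mul_const (2 * Real.pi)⁻¹).congr_of_eventuallyEq (.of_forall fun w => ?_)
  simp only [Function.comp_apply, imCLM_apply, mul_im, mul_re, re_ofNat, ofReal_re, im_ofNat,
    ofReal_im, mul_zero, sub_zero, zero_mul, add_zero, I_im, mul_one, I_re, mul_inv_rev]
  field_simp

theorem det_eq_re_mul_im_sub_re_mul_im (L : ℂ →L[ℝ] ℂ) :
    L.det = (L 1).re * (L I).im - (L I).re * (L 1).im := by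
  rw [ContinuousLinearMap.det, ← LinearMap.det_toMatrix basisOneI, Matrix.det_fin_two]
  simp [LinearMap.toMatrix_apply]

end Derivatives

section PolarMap

/-- Area-preserving polar coordinates, up to the factor `-π`: the strip `0 ≤ im z ≤ 1` is
wrapped around the disk, its bottom line being collapsed to the origin. The height is clamped
outside the strip; below it, this is done by `Real.sqrt`. -/
noncomputable def polarMap (z : ℂ) : ℂ := √(min z.im 1) * eCirc z.re

variable {z : ℂ}

theorem norm_polarMap (z : ℂ) : ‖polarMap z‖ = √(min z.im 1) := by
  simp [polarMap, norm_eCirc]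

theorem norm_polarMap_mul_eCirc (z : ℂ) : ‖polarMap z‖ * eCirc z.re = polarMap z := by
  rw [norm_polarMap, polarMap]

@[fun_prop]
theorem continuous_polarMap : Continuous polarMap := by
  unfold polarMap
  fun_prop

theorem polarMap_mem_Disk (z : ℂ) : polarMap z ∈ Disk :=
  mem_closedBall_zero_iff.2 <| by simp [norm_polarMap, Real.sqrt_le_one]

theorem polarMap_mem_ball (hz : z.im < 1) : polarMap z ∈ ball 0 1 :=
  mem_ball_zero_iff.2 <| by rw [norm_polarMap, Real.sqrt_lt' one_pos]; simp [hz]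

theorem polarMap_of_im_nonpos (hz : z.im ≤ 0) : polarMap z = 0 := by
  simp [polarMap, Real.sqrt_eq_zero_of_nonpos (min_le_of_left_le hz)]

theorem polarMap_of_one_le_im (hz : 1 ≤ z.im) : polarMap z = eCirc z.re := by
  simp [polarMap, min_eq_right hz]

theorem polarMap_ne_zero (hz : 0 < z.im) : polarMap z ≠ 0 :=
  norm_pos_iff.1 <| by simpa [norm_polarMap] using hz

theorem sq_norm_polarMap (hz : z ∈ openStrip) : ‖polarMap z‖ ^ 2 = z.im := by
  rw [norm_polarMap, min_eq_left hz.2.le, Real.sq_sqrt hz.1.le]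

theorem polarMap_add_intCast (z : ℂ) (n : ℤ) : polarMap (z + n) = polarMap z := by
  simp [polarMap, eCirc_add_int]

theorem exists_hasFDerivAt_polarMap (hz : z ∈ openStrip) :
    ∃ P : ℂ →L[ℝ] ℂ, HasFDerivAt polarMap P z ∧ P.det = -Real.pi := by
  have hsqrt := ofRealCLM.hasFDerivAt.comp z ((imCLM.hasFDerivAt (x := z)).sqrt hz.1.ne')
  have hcirc := (hasDerivAt_eCirc z.re).hasFDerivAt.comp z (reCLM.hasFDerivAt (x := z))
  have hclamp : polarMap =ᶠ[nhds z] fun w => (√w.im : ℂ) * eCirc w.re := by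
    filter_upwards [continuous_im.continuousAt.eventually_lt continuousAt_const hz.2] with w hw
    rw [polarMap, min_eq_left hw.le]
  have hpos := Real.sqrt_pos.2 hz.1
  have hderiv : HasFDerivAt (fun w : ℂ => (√w.im : ℂ) * eCirc w.re)
      (reCLM.smulRight (√z.im * (2 * Real.pi * I * eCirc z.re)) +
        imCLM.smulRight (eCirc z.re / (2 * √z.im : ℝ))) z := by
    refine (hsqrt.mul hcirc).congr_fderiv (ContinuousLinearMap.ext fun v => ?_)
    simp only [imCLM_apply, Function.comp_apply, ofRealCLM_apply, coe_smul, one_div, mul_inv_rev,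
      ContinuousLinearMap.comp_smulₛₗ, Real.ringHom_apply, add_apply, smul_apply,
      ContinuousLinearMap.comp_apply, reCLM_apply, ContinuousLinearMap.toSpanSingleton_apply,
      real_smul, ofReal_mul, ofReal_inv, ofReal_ofNat, smul_eq_mul,
      ContinuousLinearMap.smulRight_apply]
    ring
  refine ⟨_, hderiv.congr_of_eventuallyEq hclamp, ?_⟩
  have hnorm : (eCirc z.re).re ^ 2 + (eCirc z.re).im ^ 2 = 1 := by
    rw [← normSq_add_mul_I, re_add_im, normSq_eq_norm_sq, norm_eCirc, one_pow]
  rw [det_eq_re_mul_im_sub_re_mul_im]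
  simp only [add_apply, ContinuousLinearMap.smulRight_apply, reCLM_apply, one_re, one_smul,
    imCLM_apply, one_im, zero_smul, add_zero, mul_re, ofReal_re, re_ofNat, im_ofNat, ofReal_im,
    mul_zero, sub_zero, I_re, mul_im, zero_mul, I_im, mul_one, sub_self, zero_sub, mul_neg,
    zero_add, div_ofReal_im, neg_mul, div_ofReal_re, neg_zero]
  field_simp
  linear_combination (-1) * hnorm

end PolarMap

section DiskMap

/-- An injective area-preserving self-map of the closed disk that fixes the origin; it need only
be differentiable in the interior. -/
structure IsAreaPreservingDiskMap (f : ℂ → ℂ) : Prop where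
  mapsTo : MapsTo f Disk Disk
  injOn : InjOn f Disk
  continuousOn : ContinuousOn f Disk
  differentiableAt : ∀ z ∈ ball (0 : ℂ) 1, DifferentiableAt ℝ f z
  det_fderiv : ∀ z ∈ ball (0 : ℂ) 1, (fderiv ℝ f z).det = 1
  map_zero : f 0 = 0

/-- The blow-up of a disk map `f` at the origin, which is `f (polarMap z) / ‖polarMap z‖` above
the real axis. Where `polarMap z = 0` the quotient is `0 / 0 = 0`, and there remains the
linearization at the origin. -/
noncomputable def blowUp (f : ℂ → ℂ) (z : ℂ) : ℂ :=
  fderiv ℝ f 0 (eCirc z.re) +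
    (f (polarMap z) - fderiv ℝ f 0 (polarMap z)) / ‖polarMap z‖

theorem blowUp_of_im_nonpos {f : ℂ → ℂ} (h0 : f 0 = 0) {z : ℂ} (hz : z.im ≤ 0) :
    blowUp f z = fderiv ℝ f 0 (eCirc z.re) := by
  simp [blowUp, polarMap_of_im_nonpos hz, h0]

theorem blowUp_of_im_pos (f : ℂ → ℂ) {z : ℂ} (hz : 0 < z.im) :
    blowUp f z = f (polarMap z) / ‖polarMap z‖ := by
  have hne : (‖polarMap z‖ : ℂ) ≠ 0 := ofReal_ne_zero.2 (norm_ne_zero_iff.2 (polarMap_ne_zero hz))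
  have hlin : fderiv ℝ f 0 (polarMap z) = ‖polarMap z‖ * fderiv ℝ f 0 (eCirc z.re) := by
    rw [← real_smul, ← map_smul, real_smul, norm_polarMap_mul_eCirc]
  rw [blowUp, hlin]
  field_simp
  ring

theorem blowUp_div_norm (f : ℂ → ℂ) {z : ℂ} (hz : 0 < z.im) :
    blowUp f z / ‖blowUp f z‖ = f (polarMap z) / ‖f (polarMap z)‖ := by
  have hne : (‖polarMap z‖ : ℂ) ≠ 0 := ofReal_ne_zero.2 (norm_ne_zero_iff.2 (polarMap_ne_zero hz))
  rw [blowUp_of_im_pos f hz, norm_div, norm_real, norm_norm, ofReal_div,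
    div_div_div_cancel_right₀ hne]

theorem blowUp_add_intCast (f : ℂ → ℂ) (z : ℂ) (n : ℤ) : blowUp f (z + n) = blowUp f z := by
  simp only [blowUp, polarMap_add_intCast, add_re, intCast_re, eCirc_add_int]

namespace IsAreaPreservingDiskMap

variable {f : ℂ → ℂ} {z : ℂ}

theorem continuous_comp_polarMap (hf : IsAreaPreservingDiskMap f) :
    Continuous fun z => f (polarMap z) :=
  hf.continuousOn.comp_continuous continuous_polarMap polarMap_mem_Disk

theorem apply_ne_zero (hf : IsAreaPreservingDiskMap f) (hz : z ∈ Disk) (h0 : z ≠ 0) : f z ≠ 0 :=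
  fun h => h0 (hf.injOn hz (by simp [Disk]) (h.trans hf.map_zero.symm))

theorem injective_fderiv_zero (hf : IsAreaPreservingDiskMap f) :
    Function.Injective (fderiv ℝ f 0) :=
  ((fderiv ℝ f 0).toContinuousLinearEquivOfDetNeZero
    (by simp [hf.det_fderiv 0 (mem_ball_self one_pos)])).injective

theorem blowUp_ne_zero (hf : IsAreaPreservingDiskMap f) (z : ℂ) : blowUp f z ≠ 0 := by
  obtain hz | hz := le_or_gt z.im 0
  · rw [blowUp_of_im_nonpos hf.map_zero hz]
    exact (map_ne_zero_iff _ hf.injective_fderiv_zero).2 (eCirc_ne_zero _)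
  · rw [blowUp_of_im_pos f hz]
    have hne := polarMap_ne_zero hz
    exact div_ne_zero (hf.apply_ne_zero (polarMap_mem_Disk z) hne)
      (ofReal_ne_zero.2 (norm_ne_zero_iff.2 hne))

theorem continuous_blowUp (hf : IsAreaPreservingDiskMap f) : Continuous (blowUp f) := by
  have hnum : Continuous fun z => f (polarMap z) - fderiv ℝ f 0 (polarMap z) :=
    hf.continuous_comp_polarMap.sub (by fun_prop)
  refine Continuous.add (by fun_prop) (continuous_iff_continuousAt.2 fun z => ?_)
  obtain hz | hz := eq_or_ne (polarMap z) 0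
  · have hlittle : (fun p => f p - fderiv ℝ f 0 p) =o[nhds 0] fun p => (‖p‖ : ℂ) := by
      have := (hf.differentiableAt 0 (mem_ball_self one_pos)).hasFDerivAt.isLittleO
      simpa only [hf.map_zero, sub_zero, isLittleO_ofReal_right] using this.norm_right
    have htendsto := hlittle.tendsto_div_nhds_zero.comp
      (hz ▸ continuous_polarMap.tendsto z)
    simpa [ContinuousAt, hz, Function.comp_def] using htendsto
  · exact hnum.continuousAt.div (by fun_prop) (ofReal_ne_zero.2 (norm_ne_zero_iff.2 hz))

end IsAreaPreservingDiskMap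

end DiskMap

section DiskLift

/-- `θ` is a continuous argument, counted in full turns, of the blow-up of the disk map `f`,
normalized to be the lift `F` of the projectivized linearization on the lower half plane. -/
structure IsAngularLift (f : ℂ → ℂ) (F : ℝ → ℝ) (θ : ℂ → ℝ) : Prop where
  continuous : Continuous θ
  eCirc_apply : ∀ z, eCirc (θ z) = blowUp f z / ‖blowUp f z‖
  apply_of_im_nonpos : ∀ z : ℂ, z.im ≤ 0 → θ z = F z.re

/-- The lift of the disk map `f` to polar coordinates which has angular part `θ`. Its height is
`‖f (polarMap z)‖ ^ 2` in the strip, and that of `z` outside. -/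
noncomputable def diskLift (f : ℂ → ℂ) (θ : ℂ → ℝ) (z : ℂ) : ℂ :=
  θ z + (‖f (polarMap z)‖ ^ 2 + (z.im - ‖polarMap z‖ ^ 2) : ℝ) * I

variable {f : ℂ → ℂ} {θ : ℂ → ℝ} {z : ℂ}

@[simp]
theorem diskLift_re (f : ℂ → ℂ) (θ : ℂ → ℝ) (z : ℂ) : (diskLift f θ z).re = θ z := by
  rw [diskLift, add_re, ofReal_re, re_ofReal_mul, I_re, mul_zero, add_zero]

theorem diskLift_im (f : ℂ → ℂ) (θ : ℂ → ℝ) (z : ℂ) :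
    (diskLift f θ z).im = ‖f (polarMap z)‖ ^ 2 + (z.im - ‖polarMap z‖ ^ 2) := by
  rw [diskLift, add_im, ofReal_im, im_ofReal_mul, I_im, mul_one, zero_add]

theorem diskLift_im_of_mem_openStrip (f : ℂ → ℂ) (θ : ℂ → ℝ) (hz : z ∈ openStrip) :
    (diskLift f θ z).im = ‖f (polarMap z)‖ ^ 2 := by
  rw [diskLift_im, sq_norm_polarMap hz, sub_self, add_zero]

theorem diskLift_im_of_im_nonpos (h0 : f 0 = 0) (θ : ℂ → ℝ) (hz : z.im ≤ 0) :
    (diskLift f θ z).im = z.im := by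
  simp [diskLift_im, polarMap_of_im_nonpos hz, h0]

theorem diskLift_im_of_one_le_im {G : ℝ → ℝ} (hG : ∀ x, f (eCirc x) = eCirc (G x)) (θ : ℂ → ℝ)
    (hz : 1 ≤ z.im) : (diskLift f θ z).im = z.im := by
  simp [diskLift_im, polarMap_of_one_le_im hz, hG, norm_eCirc]

namespace IsAngularLift

variable {F G : ℝ → ℝ}

theorem apply_add_intCast {F : CircleDeg1Lift} (hθ : IsAngularLift f F θ) (z : ℂ) (n : ℤ) :
    θ (z + n) = θ z + n := by
  have hcont := hθ.continuous
  obtain ⟨m, hm⟩ := exists_int_eqOn_add_of_eCirc_eq isPreconnected_univ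
    (θ₁ := fun z => θ (z + n)) (θ₂ := θ) (by fun_prop) (by fun_prop) fun z _ => by
      rw [hθ.eCirc_apply, hθ.eCirc_apply, blowUp_add_intCast]
  have hmn := hm 0 trivial
  rw [hθ.apply_of_im_nonpos _ (by simp), hθ.apply_of_im_nonpos _ (by simp), add_re, intCast_re,
    F.map_add_int, add_right_inj] at hmn
  rw [hm z trivial, hmn]

theorem exists_int_apply_of_one_le_im (hθ : IsAngularLift f F θ) (hGc : Continuous G)
    (hG : ∀ x, f (eCirc x) = eCirc (G x)) : ∃ m : ℤ, ∀ z : ℂ, 1 ≤ z.im → θ z = G z.re + m :=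
  exists_int_eqOn_add_of_eCirc_eq (convex_halfSpace_im_ge 1).isPreconnected
    hθ.continuous.continuousOn (hGc.comp continuous_re).continuousOn fun z (hz : 1 ≤ z.im) => by
      rw [hθ.eCirc_apply, blowUp_div_norm f (zero_lt_one.trans_le hz), polarMap_of_one_le_im hz, hG,
        norm_eCirc, ofReal_one, div_one]

end IsAngularLift

namespace IsAreaPreservingDiskMap

variable {F G : ℝ → ℝ}

theorem exists_isAngularLift (hf : IsAreaPreservingDiskMap f) (hFc : Continuous F)
    (hF : ∀ x, fderiv ℝ f 0 (eCirc x) / (‖fderiv ℝ f 0 (eCirc x)‖ : ℂ) = eCirc (F x)) :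
    ∃ θ, IsAngularLift f F θ := by
  obtain ⟨θ, hθ, hcirc⟩ := exists_continuous_eCirc_eq_div_norm hf.continuous_blowUp
    hf.blowUp_ne_zero
  obtain ⟨n, hn⟩ := exists_int_eqOn_add_of_eCirc_eq (convex_halfSpace_im_le 0).isPreconnected
    (hFc.comp continuous_re).continuousOn hθ.continuousOn fun z (hz : z.im ≤ 0) => by
      rw [hcirc, blowUp_of_im_nonpos hf.map_zero hz, hF, Function.comp_apply]
  exact ⟨fun z => θ z + n, by fun_prop, fun z => by rw [eCirc_add_int, hcirc],
    fun z hz => (hn z hz).symm⟩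

theorem mapsTo_ball (hf : IsAreaPreservingDiskMap f) {G : CircleDeg1Lift} (hGc : Continuous G)
    (hG : ∀ x, f (eCirc x) = eCirc (G x)) : MapsTo f (ball 0 1) (ball 0 1) := by
  intro z hz
  have hzD : z ∈ Disk := ball_subset_closedBall hz
  rw [mem_ball_zero_iff]
  refine (mem_closedBall_zero_iff.1 (hf.mapsTo hzD)).lt_of_ne fun hnorm => ?_
  obtain ⟨y, hy⟩ := exists_eCirc_eq hnorm
  obtain ⟨x, rfl⟩ := hGc.surjective G.tendsto_atTop G.tendsto_atBot y
  have hx : eCirc x = z := hf.injOn (by simp [Disk, norm_eCirc]) hzD (by rw [hG, hy])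
  rw [← hx, mem_ball_zero_iff, norm_eCirc] at hz
  exact lt_irrefl _ hz

theorem mapsTo_diskLift (hf : IsAreaPreservingDiskMap f) {G : CircleDeg1Lift}
    (hGc : Continuous G) (hG : ∀ x, f (eCirc x) = eCirc (G x)) (θ : ℂ → ℝ) :
    MapsTo (diskLift f θ) openStrip openStrip := fun z hz => by
  have hpos : 0 < ‖f (polarMap z)‖ :=
    norm_pos_iff.2 (hf.apply_ne_zero (polarMap_mem_Disk z) (polarMap_ne_zero hz.1))
  have hlt : ‖f (polarMap z)‖ < 1 :=
    mem_ball_zero_iff.1 (hf.mapsTo_ball hGc hG (polarMap_mem_ball hz.2))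
  change (diskLift f θ z).im ∈ Ioo 0 1
  rw [diskLift_im_of_mem_openStrip f θ hz]
  exact ⟨by positivity, pow_lt_one₀ hpos.le hlt two_ne_zero⟩

theorem norm_polarMap_diskLift (hf : IsAreaPreservingDiskMap f)
    (hG : ∀ x, f (eCirc x) = eCirc (G x)) (θ : ℂ → ℝ) (z : ℂ) :
    ‖polarMap (diskLift f θ z)‖ = ‖f (polarMap z)‖ := by
  obtain h0 | h0 := le_or_gt z.im 0
  · rw [polarMap_of_im_nonpos (diskLift_im_of_im_nonpos hf.map_zero θ h0 ▸ h0),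
      polarMap_of_im_nonpos h0, hf.map_zero]
  obtain h1 | h1 := le_or_gt 1 z.im
  · rw [polarMap_of_one_le_im (diskLift_im_of_one_le_im hG θ h1 ▸ h1), polarMap_of_one_le_im h1, hG,
      norm_eCirc, norm_eCirc]
  · have hle := mem_closedBall_zero_iff.1 (hf.mapsTo (polarMap_mem_Disk z))
    rw [norm_polarMap, diskLift_im_of_mem_openStrip f θ ⟨h0, h1⟩,
      min_eq_left (pow_le_one₀ (norm_nonneg _) hle), Real.sqrt_sq (norm_nonneg _)]

theorem semiconj_diskLift (hf : IsAreaPreservingDiskMap f) (hθ : IsAngularLift f F θ)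
    (hG : ∀ x, f (eCirc x) = eCirc (G x)) : Function.Semiconj polarMap (diskLift f θ) f :=
  fun z => by
  rw [← norm_polarMap_mul_eCirc, hf.norm_polarMap_diskLift hG, diskLift_re]
  obtain hz | hz := le_or_gt z.im 0
  · simp [polarMap_of_im_nonpos hz, hf.map_zero]
  · have hne := hf.apply_ne_zero (polarMap_mem_Disk z) (polarMap_ne_zero hz)
    rw [hθ.eCirc_apply, blowUp_div_norm f hz]
    exact mul_div_cancel₀ _ (ofReal_ne_zero.2 (norm_ne_zero_iff.2 hne))

theorem eCirc_re_eq_of_diskLift_eq (hf : IsAreaPreservingDiskMap f) (hθ : IsAngularLift f F θ)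
    {w : ℂ} (hzw : θ z = θ w) (hpolar : polarMap z = polarMap w) (him : z.im = w.im) :
    eCirc z.re = eCirc w.re := by
  obtain hz | hz := le_or_gt z.im 0
  · have hdir : ‖fderiv ℝ f 0 (eCirc z.re)‖⁻¹ • fderiv ℝ f 0 (eCirc z.re) =
        ‖fderiv ℝ f 0 (eCirc w.re)‖⁻¹ • fderiv ℝ f 0 (eCirc w.re) := by
      have := hθ.eCirc_apply z
      rw [hzw, hθ.eCirc_apply w, blowUp_of_im_nonpos hf.map_zero hz,
        blowUp_of_im_nonpos hf.map_zero (him ▸ hz)] at this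
      simpa [div_eq_inv_mul] using this.symm
    have hray : SameRay ℝ (eCirc z.re) (eCirc w.re) := by
      have hne (x : ℝ) : fderiv ℝ f 0 (eCirc x) ≠ 0 :=
        (map_ne_zero_iff _ hf.injective_fderiv_zero).2 (eCirc_ne_zero x)
      exact hf.injective_fderiv_zero.sameRay_map_iff.1
        ((sameRay_iff_inv_norm_smul_eq_of_ne (hne _) (hne _)).2 hdir)
    exact (sameRay_iff_of_norm_eq (by rw [norm_eCirc, norm_eCirc])).1 hray
  · have hne := ofReal_ne_zero.2 (norm_ne_zero_iff.2 (polarMap_ne_zero hz))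
    rw [← mul_right_inj' hne, norm_polarMap_mul_eCirc, hpolar, norm_polarMap_mul_eCirc]

theorem injective_diskLift (hf : IsAreaPreservingDiskMap f) {F : CircleDeg1Lift}
    (hθ : IsAngularLift f F θ) (hG : ∀ x, f (eCirc x) = eCirc (G x)) :
    Function.Injective (diskLift f θ) := fun z w h => by
  have hzw : θ z = θ w := by rw [← diskLift_re f θ z, h, diskLift_re]
  have himage : f (polarMap z) = f (polarMap w) := by
    rw [← hf.semiconj_diskLift hθ hG, h, hf.semiconj_diskLift hθ hG]
  have hpolar := hf.injOn (polarMap_mem_Disk z) (polarMap_mem_Disk w) himage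
  have him : z.im = w.im := by
    have := congrArg im h
    rw [diskLift_im, diskLift_im, hpolar] at this
    linarith
  obtain ⟨n, hn⟩ := eCirc_eq_eCirc_iff.1 (hf.eCirc_re_eq_of_diskLift_eq hθ hzw hpolar him)
  have hz : z = w + n := Complex.ext (by simpa using hn) (by simpa using him)
  rw [hz, hθ.apply_add_intCast, add_eq_left] at hzw
  rw [hz, Int.cast_eq_zero.1 hzw, Int.cast_zero, add_zero]

theorem differentiableAt_diskLift (hf : IsAreaPreservingDiskMap f) (hθ : IsAngularLift f F θ)
    (hz : z ∈ openStrip) : DifferentiableAt ℝ (diskLift f θ) z := by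
  obtain ⟨P, hP, -⟩ := exists_hasFDerivAt_polarMap hz
  have hp : DifferentiableAt ℝ polarMap z := hP.differentiableAt
  have hfp : DifferentiableAt ℝ (fun z => f (polarMap z)) z :=
    (hf.differentiableAt _ (polarMap_mem_ball hz.2)).comp z hp
  have hne := hf.apply_ne_zero (polarMap_mem_Disk z) (polarMap_ne_zero hz.1)
  have hcirc : DifferentiableAt ℝ (fun w => eCirc (θ w)) z := by
    have hdiv : DifferentiableAt ℝ (fun z => f (polarMap z) / (‖f (polarMap z)‖ : ℂ)) z :=
      hfp.mul ((ofRealCLM.differentiableAt.comp z (hfp.norm ℝ hne)).inv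
        (ofReal_ne_zero.2 (norm_ne_zero_iff.2 hne)))
    refine hdiv.congr_of_eventuallyEq ?_
    filter_upwards [continuous_im.continuousAt.eventually_const_lt hz.1] with w hw
    rw [hθ.eCirc_apply, blowUp_div_norm f hw]
  have hangle := differentiableAt_of_eCirc hθ.continuous.continuousAt hcirc
  have hheight := (hfp.norm_sq ℝ).add (imCLM.differentiableAt.sub (hp.norm_sq ℝ))
  exact (ofRealCLM.differentiableAt.comp z hangle).add
    ((ofRealCLM.differentiableAt.comp z hheight).mul_const I)

theorem det_fderiv_diskLift (hf : IsAreaPreservingDiskMap f) (hθ : IsAngularLift f F θ)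
    {G : CircleDeg1Lift} (hGc : Continuous G) (hG : ∀ x, f (eCirc x) = eCirc (G x))
    (hz : z ∈ openStrip) : (fderiv ℝ (diskLift f θ) z).det = 1 := by
  have hball := polarMap_mem_ball hz.2
  obtain ⟨P, hP, hPdet⟩ := exists_hasFDerivAt_polarMap hz
  obtain ⟨Q, hQ, hQdet⟩ := exists_hasFDerivAt_polarMap (hf.mapsTo_diskLift hGc hG θ hz)
  have hchain : Q.comp (fderiv ℝ (diskLift f θ) z) = (fderiv ℝ f (polarMap z)).comp P := by
    have hleft := hQ.comp z (hf.differentiableAt_diskLift hθ hz).hasFDerivAt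
    rw [(hf.semiconj_diskLift hθ hG).comp_eq] at hleft
    exact hleft.unique ((hf.differentiableAt _ hball).hasFDerivAt.comp z hP)
  have hdet : Q.det * (fderiv ℝ (diskLift f θ) z).det = (fderiv ℝ f (polarMap z)).det * P.det := by
    simpa only [ContinuousLinearMap.det, ContinuousLinearMap.toLinearMap_comp,
      LinearMap.det_comp] using congrArg ContinuousLinearMap.det hchain
  rw [hf.det_fderiv _ hball, hPdet, hQdet, one_mul] at hdet
  exact mul_eq_left₀ (neg_ne_zero.2 Real.pi_ne_zero) |>.1 hdet

theorem isAnnulusLift_diskLift (hf : IsAreaPreservingDiskMap f) {F G : CircleDeg1Lift}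
    (hθ : IsAngularLift f F θ) (hGc : Continuous G) (hG : ∀ x, f (eCirc x) = eCirc (G x))
    (htop : ∀ z : ℂ, 1 ≤ z.im → θ z = G z.re) : IsAnnulusLift (diskLift f θ) F G where
  continuous := by
    have hheight := (hf.continuous_comp_polarMap.norm.pow 2).add
      (continuous_im.sub (continuous_polarMap.norm.pow 2))
    exact (continuous_ofReal.comp hθ.continuous).add
      ((continuous_ofReal.comp hheight).mul continuous_const)
  injective := hf.injective_diskLift hθ hG
  map_add_one z := by
    have hpolar := polarMap_add_intCast z 1
    have hangle := hθ.apply_add_intCast z 1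
    rw [Int.cast_one] at hpolar hangle
    apply Complex.ext <;> simp [diskLift_im, hpolar, hangle]
  apply_of_im_nonpos z hz := by
    rw [← re_add_im (diskLift f θ z), diskLift_re, hθ.apply_of_im_nonpos z hz,
      diskLift_im_of_im_nonpos hf.map_zero θ hz]
  apply_of_one_le_im z hz := by
    rw [← re_add_im (diskLift f θ z), diskLift_re, htop z hz, diskLift_im_of_one_le_im hG θ hz]
  mapsTo := hf.mapsTo_diskLift hGc hG θ
  volume_image X hX hXs := by
    rw [← MeasureTheory.lintegral_abs_det_fderiv_eq_addHaar_image MeasureTheory.volume hX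
      (fun z hz => (hf.differentiableAt_diskLift hθ (hXs hz)).hasFDerivAt.hasFDerivWithinAt)
      (hf.injective_diskLift hθ hG).injOn,
      MeasureTheory.setLIntegral_congr_fun (g := fun _ => 1) hX
        fun z hz => by simp [hf.det_fderiv_diskLift hθ hGc hG (hXs hz)]]
    simp

end IsAreaPreservingDiskMap

end DiskLift

section RotationNumber

theorem translationNumber_translate_intCast_mul (G : CircleDeg1Lift) (m : ℤ) :
    (CircleDeg1Lift.translate (.ofAdd (m : ℝ)) * G : CircleDeg1Lift).translationNumber =
      m + G.translationNumber := by
  have hcomm : Commute (CircleDeg1Lift.translate (.ofAdd (m : ℝ)) : CircleDeg1Lift) G := by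
    ext x
    simp
  rw [CircleDeg1Lift.translationNumber_mul_of_commute hcomm,
    CircleDeg1Lift.translationNumber_translate]

theorem IsAreaPreservingDiskMap.exists_isAnnulusLift {f : ℂ → ℂ} (hf : IsAreaPreservingDiskMap f)
    {F G : CircleDeg1Lift} (hFc : Continuous F)
    (hF : ∀ x, fderiv ℝ f 0 (eCirc x) / (‖fderiv ℝ f 0 (eCirc x)‖ : ℂ) = eCirc (F x))
    (hGc : Continuous G) (hG : ∀ x, f (eCirc x) = eCirc (G x)) :
    ∃ (K : ℂ → ℂ) (m : ℤ), Function.Semiconj polarMap K f ∧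
      IsAnnulusLift K F (CircleDeg1Lift.translate (.ofAdd (m : ℝ)) * G : CircleDeg1Lift) := by
  obtain ⟨θ, hθ⟩ := hf.exists_isAngularLift hFc hF
  obtain ⟨m, hm⟩ := hθ.exists_int_apply_of_one_le_im hGc hG
  have hrot (x : ℝ) : (CircleDeg1Lift.translate (.ofAdd (m : ℝ)) * G : CircleDeg1Lift) x =
      G x + m := add_comm _ _
  refine ⟨diskLift f θ, m, hf.semiconj_diskLift hθ hG, hf.isAnnulusLift_diskLift hθ
    (continuous_const.add hGc) (fun x => ?_) fun z hz => ?_⟩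
  · rw [hG, hrot, eCirc_add_int]
  · rw [hm z hz, hrot]

theorem rotation_number_of_linearization_general {f : ℂ → ℂ} (hf : IsAreaPreservingDiskMap f)
    (hper : ∀ z ∈ ball (0 : ℂ) 1, z ≠ 0 → ∀ n : ℕ, 1 ≤ n → f^[n] z ≠ z)
    {F G : CircleDeg1Lift} (hFc : Continuous F)
    (hF : ∀ x, fderiv ℝ f 0 (eCirc x) / (‖fderiv ℝ f 0 (eCirc x)‖ : ℂ) = eCirc (F x))
    (hGc : Continuous G) (hG : ∀ x, f (eCirc x) = eCirc (G x)) :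
    (F.translationNumber : AddCircle (1 : ℝ)) = G.translationNumber := by
  obtain ⟨K, m, hsemi, hK⟩ := hf.exists_isAnnulusLift hFc hF hGc hG
  suffices hτ : F.translationNumber = m + G.translationNumber by
    rw [hτ, AddCircle.coe_add, (AddCircle.coe_eq_zero_iff 1).2 ⟨m, by simp⟩, zero_add]
  rw [← translationNumber_translate_intCast_mul]
  by_contra hne
  obtain ⟨z, hz, n, hn, p, hperiodic⟩ := hK.exists_iterate_eq_add_intCast hne
  refine hper (polarMap z) (polarMap_mem_ball hz.2) (polarMap_ne_zero hz.1) n hn ?_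
  rw [← hsemi.iterate_right n z, hperiodic, polarMap_add_intCast]

theorem translationNumber_eq_of_tendsto_div {f : CircleDeg1Lift} {x τ : ℝ}
    (h : Tendsto (fun n : ℕ => (f^[n] x - x) / n) atTop (nhds τ)) : f.translationNumber = τ := by
  refine tendsto_nhds_unique (f.tendsto_translationNumber x) ?_
  simpa only [CircleDeg1Lift.coe_pow] using h

theorem SmoothDiskDiffeo.isAreaPreservingDiskMap (φ : SmoothDiskDiffeo)
    (harea : ∀ z ∈ Disk, (fderivWithin ℝ φ.toFun Disk z).det = 1) (hfix : φ.toFun 0 = 0) :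
    IsAreaPreservingDiskMap φ.toFun where
  mapsTo := φ.mapsTo
  injOn := LeftInvOn.injOn φ.left_inv
  continuousOn := φ.smooth.continuousOn
  differentiableAt z hz := (φ.smooth.contDiffAt (closedBall_mem_nhds_of_mem hz)).differentiableAt
    (by simp)
  det_fderiv z hz := by
    rw [← fderivWithin_of_mem_nhds (closedBall_mem_nhds_of_mem hz)]
    exact harea z (ball_subset_closedBall hz)
  map_zero := hfix

end RotationNumber

/-- **The rotation number of the projectivized linearization at the fixed point equals
the rotation number on the boundary.**  Here `T = Dφ(0)`, `f_T(v) = Tv/|Tv|` on the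
circle, and rotation numbers are compared in `ℝ/ℤ` via translation numbers of
(monotone, degree one) lifts `F` of `f_T` and `G` of `φ|_{∂D}`. -/
theorem rotation_number_of_linearization (φ : SmoothDiskDiffeo)
    (harea : ∀ z ∈ Disk, (fderivWithin ℝ φ.toFun Disk z).det = 1)
    (hfix : φ.toFun 0 = 0)
    (hper : ∀ z ∈ Disk, z ≠ 0 → ∀ n : ℕ, 1 ≤ n → φ.toFun^[n] z ≠ z)
    (F G : ℝ → ℝ) (α β : ℝ)
    (hF_cont : Continuous F) (hF_mono : Monotone F)
    (hF_deg : ∀ x : ℝ, F (x + 1) = F x + 1)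
    (hF_lift : ∀ x : ℝ,
      fderivWithin ℝ φ.toFun Disk 0 (eCirc x) /
          Complex.ofReal ‖fderivWithin ℝ φ.toFun Disk 0 (eCirc x)‖ = eCirc (F x))
    (hα : ∀ x : ℝ, Tendsto (fun n : ℕ => (F^[n] x - x) / n) atTop (nhds α))
    (hG_cont : Continuous G) (hG_mono : Monotone G)
    (hG_deg : ∀ x : ℝ, G (x + 1) = G x + 1)
    (hG_lift : ∀ x : ℝ, φ.toFun (eCirc x) = eCirc (G x))
    (hβ : ∀ x : ℝ, Tendsto (fun n : ℕ => (G^[n] x - x) / n) atTop (nhds β)) :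
    (α : AddCircle (1:ℝ)) = (β : AddCircle (1:ℝ)) := by
  let F' : CircleDeg1Lift := ⟨⟨F, hF_mono⟩, hF_deg⟩
  let G' : CircleDeg1Lift := ⟨⟨G, hG_mono⟩, hG_deg⟩
  have hdisk : Disk ∈ nhds 0 := closedBall_mem_nhds 0 one_pos
  simp only [fderivWithin_of_mem_nhds hdisk] at hF_lift
  rw [← translationNumber_eq_of_tendsto_div (f := F') (hα 0),
    ← translationNumber_eq_of_tendsto_div (f := G') (hβ 0)]
  exact rotation_number_of_linearization_general (φ.isAreaPreservingDiskMap harea hfix)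
    (fun z hz => hper z (ball_subset_closedBall hz)) (F := F') (G := G')
    hF_cont hF_lift hG_cont hG_lift
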